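/- Let φ : [0, ∞) → ℝ be continuous, strictly convex, twice continuously differentiable on (0, ∞), with φ(1) = 0, φ′(1) = 0 and φ″(1) > 0, and let f ∈ ℝⁿ. For each δ > 0 let q̃(δ) be the unique maximizer over Δₙ of q ↦ Σᵢ qᵢ fᵢ − (1/δ) Σᵢ pᵢ φ(qᵢ/pᵢ) (uniqueness holds by strict concavity), and set q̃(0) = p. Then the expected cost under the penalty-form worst-case distribution satisfies lim_{δ ↓ 0} (Σᵢ q̃ᵢ(δ) fᵢ − E_p(f)) / δ = V_p(f) / φ″(1). -/

import Mathlib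

open Filter

/-!
Multiplied by `s > 0` and up to a constant, the objective at `δ = s` is
`s * ∑ i, q i * (f i - E_p f) - ∑ i, p i * φ (q i / p i)`; let `h s` be its maximum over the
simplex, attained at `q̃ s`. Since `h` is a maximum of affine functions of `s`, the centred cost
`∑ i, q̃ s i * (f i - E_p f)` of the maximizer is a subgradient of `h` at `s`, so the limit follows
from `h s ~ V_p f / (2 * K) * s ^ 2`, where `K = φ'' 1`.

The upper bound on `h` is a Fenchel inequality: near `1` the function `φ` is almost
`K / 2 * (x - 1) ^ 2`, and by convexity it grows at least linearly away from `1`, so that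
`y * (x - 1) - φ x ≤ y ^ 2 / (2 * c)` for all `x ≥ 0`, once `c < K` and `y` is small. The lower
bound comes from the test point `q i = p i * (1 + s * (f i - E_p f) / c)` with `c > K`.
-/

open Asymptotics Topology

section QuadraticExpansion

lemma isLittleO_sub_taylor_two {f : ℝ → ℝ} {s : Set ℝ} {a : ℝ} (hs : IsOpen s)
    (hconv : Convex ℝ s) (ha : a ∈ s) (hf : ContDiffOn ℝ 2 f s) :
    (fun x => f x - (f a + deriv f a * (x - a) + deriv (deriv f) a / 2 * (x - a) ^ 2))
      =o[𝓝 a] fun x => (x - a) ^ 2 := by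
  have htaylor := taylor_isLittleO hconv ha (n := 2) hf
  rw [hs.nhdsWithin_eq ha] at htaylor
  refine htaylor.congr_left fun x => ?_
  simp only [taylorWithinEval_succ, taylor_within_zero_eval, iteratedDerivWithin_of_isOpen hs ha,
    iteratedDeriv_succ, iteratedDeriv_zero, smul_eq_mul,
    Nat.factorial, Nat.cast_one, Nat.cast_zero]
  ring

variable {φ : ℝ → ℝ} {a c K : ℝ}

lemma eventually_quadratic_le
    (hφ : (fun x => φ x - K / 2 * (x - a) ^ 2) =o[𝓝 a] fun x => (x - a) ^ 2) (hc : c < K) :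
    ∀ᶠ x in 𝓝 a, c / 2 * (x - a) ^ 2 ≤ φ x := by
  filter_upwards [hφ.bound (half_pos (sub_pos.2 hc))] with x hx
  rw [Real.norm_eq_abs, Real.norm_of_nonneg (sq_nonneg _)] at hx
  linarith [(abs_le.1 hx).1]

lemma eventually_le_quadratic
    (hφ : (fun x => φ x - K / 2 * (x - a) ^ 2) =o[𝓝 a] fun x => (x - a) ^ 2) (hc : K < c) :
    ∀ᶠ x in 𝓝 a, φ x ≤ c / 2 * (x - a) ^ 2 := by
  filter_upwards [hφ.bound (half_pos (sub_pos.2 hc))] with x hx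
  rw [Real.norm_eq_abs, Real.norm_of_nonneg (sq_nonneg _)] at hx
  linarith [(abs_le.1 hx).2]

end QuadraticExpansion

section Convexity

lemma div_mul_norm_sub_le_of_convexOn {E : Type*} [NormedAddCommGroup E] [NormedSpace ℝ E]
    {s : Set E} {φ : E → ℝ} {a x : E} {m r : ℝ} (hφ : ConvexOn ℝ s φ) (ha : a ∈ s)
    (hφa : φ a ≤ 0) (hr : 0 < r) (hsphere : ∀ y ∈ s, ‖y - a‖ = r → m ≤ φ y) (hx : x ∈ s)
    (hrx : r ≤ ‖x - a‖) : m / r * ‖x - a‖ ≤ φ x := by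
  have hpos : 0 < ‖x - a‖ := hr.trans_le hrx
  set t := r / ‖x - a‖ with ht
  have ht0 : 0 < t := div_pos hr hpos
  have ht1 : 0 ≤ 1 - t := sub_nonneg.2 ((div_le_one hpos).2 hrx)
  have hdist : ‖(1 - t) • a + t • x - a‖ = r := by
    rw [show (1 - t) • a + t • x - a = t • (x - a) by module, norm_smul, Real.norm_of_nonneg ht0.le,
      ht, div_mul_cancel₀ _ hpos.ne']
  have hm : m ≤ t * φ x := calc
    m ≤ φ ((1 - t) • a + t • x) :=
      hsphere _ (hφ.1 ha hx ht1 ht0.le (sub_add_cancel 1 t)) hdist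
    _ ≤ (1 - t) * φ a + t * φ x := hφ.2 ha hx ht1 ht0.le (sub_add_cancel 1 t)
    _ ≤ t * φ x := by linarith [mul_nonpos_of_nonneg_of_nonpos ht1 hφa]
  calc m / r * ‖x - a‖ = m / t := by rw [ht]; field_simp
    _ ≤ φ x := (div_le_iff₀' ht0).2 hm

/-- The convex conjugate of `φ` on `s` satisfies `φ* y ≤ a * y + y ^ 2 / (2 * c)` near `0`. -/
lemma eventually_forall_mul_sub_le {s : Set ℝ} {φ : ℝ → ℝ} {a c : ℝ} (hφ : ConvexOn ℝ s φ)
    (ha : a ∈ s) (hφa : φ a ≤ 0) (hc : 0 < c)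
    (hquad : ∀ᶠ x in 𝓝 a, c / 2 * (x - a) ^ 2 ≤ φ x) :
    ∀ᶠ y in 𝓝 (0 : ℝ), ∀ x ∈ s, y * (x - a) - φ x ≤ y ^ 2 / (2 * c) := by
  obtain ⟨r, hr, hball⟩ := Metric.nhds_basis_closedBall.eventually_iff.1 hquad
  have hsmall : ∀ᶠ y in 𝓝 (0 : ℝ), |y| ≤ c / 2 * r :=
    continuous_abs.continuousAt.eventually_le_const (by rw [abs_zero]; positivity)
  filter_upwards [hsmall] with y hy x hx
  rcases le_total |x - a| r with hnear | hfar
  · have hsq : y ^ 2 / (2 * c) - (y * (x - a) - c / 2 * (x - a) ^ 2)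
        = (y - c * (x - a)) ^ 2 / (2 * c) := by field_simp; ring
    have hnonneg : 0 ≤ (y - c * (x - a)) ^ 2 / (2 * c) := by positivity
    linarith [hball (Metric.mem_closedBall.2 hnear)]
  · have hsphere : ∀ z ∈ s, ‖z - a‖ = r → c / 2 * r ^ 2 ≤ φ z := fun z _ hz => by
      have := hball (Metric.mem_closedBall.2 (dist_eq_norm z a ▸ hz.le))
      rwa [← sq_abs, ← Real.norm_eq_abs, hz] at this
    have hlinear : y * (x - a) ≤ φ x := calc
      y * (x - a) ≤ |y| * |x - a| := (le_abs_self _).trans (abs_mul _ _).le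
      _ ≤ c / 2 * r * |x - a| := by gcongr
      _ = c / 2 * r ^ 2 / r * |x - a| := by field_simp
      _ ≤ φ x := div_mul_norm_sub_le_of_convexOn hφ ha hφa hr hsphere hx hfar
    have hnonneg : 0 ≤ y ^ 2 / (2 * c) := by positivity
    linarith

lemma tendsto_comp_mul_div_sq {h : ℝ → ℝ} {A t : ℝ} (ht : 0 < t)
    (hh : Tendsto (fun s => h s / s ^ 2) (𝓝[>] 0) (𝓝 A)) :
    Tendsto (fun s => h (t * s) / s ^ 2) (𝓝[>] 0) (𝓝 (t ^ 2 * A)) := by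
  have hmul : Tendsto (fun s : ℝ => t * s) (𝓝[>] 0) (𝓝[>] 0) := by
    simpa using TendstoNhdsWithinIoi.const_mul ht (tendsto_id (x := 𝓝[>] (0 : ℝ)))
  refine ((hh.comp hmul).const_mul (t ^ 2)).congr fun s => ?_
  simp only [Function.comp_apply, mul_pow]
  field_simp

lemma tendsto_secant_div {h : ℝ → ℝ} {A t : ℝ} (ht : 0 < t) (ht1 : t ≠ 1)
    (hh : Tendsto (fun s => h s / s ^ 2) (𝓝[>] 0) (𝓝 A)) :
    Tendsto (fun s => (h (t * s) / s ^ 2 - h s / s ^ 2) / (t - 1)) (𝓝[>] 0)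
      (𝓝 ((t + 1) * A)) := by
  convert ((tendsto_comp_mul_div_sq ht hh).sub hh).div_const (t - 1) using 2
  have := sub_ne_zero.2 ht1
  field_simp
  ring

/-- The subgradient at `s` lies between the slopes of the secants from `s` to `t * s` for `t < 1`
and for `t > 1`; let `s → 0` first and then `t → 1`. -/
lemma tendsto_subgradient_div {h g : ℝ → ℝ} {A : ℝ}
    (hsub : ∀ s, 0 < s → ∀ t, 0 < t → h s + (t - s) * g s ≤ h t)
    (hh : Tendsto (fun s => h s / s ^ 2) (𝓝[>] 0) (𝓝 A)) :
    Tendsto (fun s => g s / s) (𝓝[>] 0) (𝓝 (2 * A)) := by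
  have hcompare : ∀ t, 0 < t → ∀ s, 0 < s →
      (t - 1) * (g s / s) ≤ h (t * s) / s ^ 2 - h s / s ^ 2 := by
    intro t ht s hs
    rw [← sub_div, le_div_iff₀ (by positivity)]
    calc (t - 1) * (g s / s) * s ^ 2 = (t * s - s) * g s := by field_simp
      _ ≤ h (t * s) - h s := by linarith [hsub s hs (t * s) (mul_pos ht hs)]
  have hcont : Tendsto (fun t : ℝ => (t + 1) * A) (𝓝 1) (𝓝 (2 * A)) :=
    Continuous.tendsto' (by fun_prop) _ _ (by ring)
  refine tendsto_order.2 ⟨fun b hb => ?_, fun b hb => ?_⟩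
  · obtain ⟨t, ⟨hbt, ht⟩, ht1⟩ := (((hcont.eventually_const_lt hb).and
      (lt_mem_nhds one_pos)).filter_mono nhdsWithin_le_nhds |>.and
      (self_mem_nhdsWithin (s := Set.Iio 1))).exists
    filter_upwards [(tendsto_secant_div ht ht1.ne hh).eventually_const_lt hbt, self_mem_nhdsWithin]
      with s hbs hs
    refine hbs.trans_le ((div_le_iff_of_neg (sub_neg.2 ht1)).2 ?_)
    linarith [hcompare t ht s hs]
  · obtain ⟨t, hbt, ht1⟩ := ((hcont.eventually_lt_const hb).filter_mono nhdsWithin_le_nhds |>.and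
      (self_mem_nhdsWithin (s := Set.Ioi 1))).exists
    have ht : 0 < t := one_pos.trans ht1
    filter_upwards [(tendsto_secant_div ht ht1.ne' hh).eventually_lt_const hbt, self_mem_nhdsWithin]
      with s hbs hs
    exact ((le_div_iff₀' (sub_pos.2 ht1)).2 (hcompare t ht s hs)).trans_lt hbs

end Convexity

section Divergence

variable {ι : Type*} [Fintype ι]

/-- The `φ`-divergence of `q` from the nominal vector `p`, the penalty of the worst-case problem.
It is meant for `p` with positive entries; an index with `p i = 0` contributes `0`. -/
noncomputable def phiDivergence (φ : ℝ → ℝ) (p q : ι → ℝ) : ℝ :=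
  ∑ i, p i * φ (q i / p i)

variable {φ : ℝ → ℝ} {p g : ι → ℝ} {c K : ℝ}

lemma mul_sum_sub_phiDivergence (hp : ∀ i, p i ≠ 0) (hg : ∑ i, p i * g i = 0) (s : ℝ)
    (q : ι → ℝ) :
    s * ∑ i, q i * g i - phiDivergence φ p q
      = ∑ i, p i * (s * g i * (q i / p i - 1) - φ (q i / p i)) := by
  have hterm : ∀ i, p i * (s * g i * (q i / p i - 1) - φ (q i / p i))
      = s * (q i * g i) - s * (p i * g i) - p i * φ (q i / p i) := fun i => by
    have := hp i
    field_simp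
  simp only [hterm, Finset.sum_sub_distrib, ← Finset.mul_sum, hg, mul_zero, sub_zero, phiDivergence]

lemma eventually_forall_mul_sum_sub_phiDivergence_le (hp : ∀ i, 0 < p i)
    (hg : ∑ i, p i * g i = 0)
    (hconj : ∀ᶠ y in 𝓝 (0 : ℝ), ∀ x ∈ Set.Ici (0 : ℝ), y * (x - 1) - φ x ≤ y ^ 2 / (2 * c)) :
    ∀ᶠ s in 𝓝 (0 : ℝ), ∀ q : ι → ℝ, (∀ i, 0 ≤ q i) →
      s * ∑ i, q i * g i - phiDivergence φ p q ≤ (∑ i, p i * g i ^ 2) / (2 * c) * s ^ 2 := by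
  have hsmall : ∀ᶠ s in 𝓝 (0 : ℝ), ∀ i, ∀ x ∈ Set.Ici (0 : ℝ),
      s * g i * (x - 1) - φ x ≤ (s * g i) ^ 2 / (2 * c) :=
    eventually_all.2 fun i =>
      (Continuous.tendsto' (by fun_prop) 0 0 (zero_mul (g i))).eventually hconj
  filter_upwards [hsmall] with s hs q hq
  calc s * ∑ i, q i * g i - phiDivergence φ p q
      = ∑ i, p i * (s * g i * (q i / p i - 1) - φ (q i / p i)) :=
        mul_sum_sub_phiDivergence (fun i => (hp i).ne') hg s q
    _ ≤ ∑ i, p i * ((s * g i) ^ 2 / (2 * c)) := by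
        gcongr with i
        · exact (hp i).le
        · exact hs i _ (div_nonneg (hq i) (hp i).le)
    _ = (∑ i, p i * g i ^ 2) / (2 * c) * s ^ 2 := by
        rw [Finset.sum_div, Finset.sum_mul]
        exact Finset.sum_congr rfl fun i _ => by ring

lemma eventually_exists_le_mul_sum_sub_phiDivergence (hp1 : ∑ i, p i = 1) (hp : ∀ i, 0 < p i)
    (hg : ∑ i, p i * g i = 0) (hc : c ≠ 0)
    (hquad : ∀ᶠ x in 𝓝 (1 : ℝ), φ x ≤ c / 2 * (x - 1) ^ 2) :
    ∀ᶠ s in 𝓝 (0 : ℝ), ∃ q ∈ stdSimplex ℝ ι,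
      (∑ i, p i * g i ^ 2) / (2 * c) * s ^ 2 ≤ s * ∑ i, q i * g i - phiDivergence φ p q := by
  have hsmall : ∀ᶠ s in 𝓝 (0 : ℝ), ∀ i, 0 < 1 + s * g i / c ∧
      φ (1 + s * g i / c) ≤ c / 2 * (1 + s * g i / c - 1) ^ 2 :=
    eventually_all.2 fun i => (Continuous.tendsto' (by fun_prop) 0 1 (by simp)).eventually
      ((lt_mem_nhds one_pos).and hquad)
  filter_upwards [hsmall] with s hs
  have hsum : ∑ i, p i * (1 + s * g i / c) = 1 := by
    have hterm : ∀ i, p i * (1 + s * g i / c) = p i + s / c * (p i * g i) := fun i => by ring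
    simp only [hterm, Finset.sum_add_distrib, ← Finset.mul_sum, hg, hp1, mul_zero, add_zero]
  refine ⟨fun i => p i * (1 + s * g i / c),
    ⟨fun i => (mul_pos (hp i) (hs i).1).le, hsum⟩, ?_⟩
  rw [mul_sum_sub_phiDivergence (fun i => (hp i).ne') hg, Finset.sum_div, Finset.sum_mul]
  refine Finset.sum_le_sum fun i _ => ?_
  rw [mul_div_cancel_left₀ _ (hp i).ne']
  calc p i * g i ^ 2 / (2 * c) * s ^ 2
      = p i * (s * g i * (1 + s * g i / c - 1) - c / 2 * (1 + s * g i / c - 1) ^ 2) := by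
        field_simp; ring
    _ ≤ p i * (s * g i * (1 + s * g i / c - 1) - φ (1 + s * g i / c)) :=
        mul_le_mul_of_nonneg_left (sub_le_sub_left (hs i).2 _) (hp i).le

variable {q : ℝ → ι → ℝ}

lemma tendsto_optimalValue_div_sq (hp1 : ∑ i, p i = 1) (hp : ∀ i, 0 < p i)
    (hg : ∑ i, p i * g i = 0) (hφconv : ConvexOn ℝ (Set.Ici 0) φ) (hK : 0 < K)
    (hφ : (fun x => φ x - K / 2 * (x - 1) ^ 2) =o[𝓝 1] fun x => (x - 1) ^ 2)
    (hq : ∀ s, 0 < s → q s ∈ stdSimplex ℝ ι)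
    (hmax : ∀ s, 0 < s → ∀ r ∈ stdSimplex ℝ ι,
      s * ∑ i, r i * g i - phiDivergence φ p r ≤ s * ∑ i, q s i * g i - phiDivergence φ p (q s)) :
    Tendsto (fun s => (s * ∑ i, q s i * g i - phiDivergence φ p (q s)) / s ^ 2) (𝓝[>] 0)
      (𝓝 ((∑ i, p i * g i ^ 2) / (2 * K))) := by
  have hcont : Tendsto (fun c => (∑ i, p i * g i ^ 2) / (2 * c)) (𝓝 K)
      (𝓝 ((∑ i, p i * g i ^ 2) / (2 * K))) :=
    tendsto_const_nhds.div (tendsto_id.const_mul 2) (by positivity)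
  have hφ1 : φ 1 ≤ 0 := by
    simpa using (eventually_le_quadratic hφ (lt_add_one K)).self_of_nhds
  refine tendsto_order.2 ⟨fun b hb => ?_, fun b hb => ?_⟩
  · obtain ⟨c, hbc, hKc⟩ := ((hcont.eventually_const_lt hb).filter_mono nhdsWithin_le_nhds |>.and
      (self_mem_nhdsWithin (s := Set.Ioi K))).exists
    have hlower := eventually_exists_le_mul_sum_sub_phiDivergence hp1 hp hg (hK.trans hKc).ne'
      (eventually_le_quadratic hφ hKc)
    filter_upwards [hlower.filter_mono nhdsWithin_le_nhds, self_mem_nhdsWithin]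
      with s ⟨r, hr, hle⟩ hs0
    exact hbc.trans_le ((le_div_iff₀ (pow_pos hs0 2)).2 (hle.trans (hmax s hs0 r hr)))
  · obtain ⟨c, ⟨hbc, hc⟩, hcK⟩ := (((hcont.eventually_lt_const hb).and
      (lt_mem_nhds hK)).filter_mono nhdsWithin_le_nhds |>.and
      (self_mem_nhdsWithin (s := Set.Iio K))).exists
    have hupper := eventually_forall_mul_sum_sub_phiDivergence_le hp hg
      (eventually_forall_mul_sub_le hφconv (Set.mem_Ici.2 zero_le_one) hφ1 hc
        (eventually_quadratic_le hφ hcK))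
    filter_upwards [hupper.filter_mono nhdsWithin_le_nhds, self_mem_nhdsWithin] with s hs hs0
    exact ((div_le_iff₀ (pow_pos hs0 2)).2 (hs _ (hq s hs0).1)).trans_lt hbc

lemma tendsto_sum_maximizer_mul_div (hp1 : ∑ i, p i = 1) (hp : ∀ i, 0 < p i)
    (hg : ∑ i, p i * g i = 0) (hφconv : ConvexOn ℝ (Set.Ici 0) φ) (hK : 0 < K)
    (hφ : (fun x => φ x - K / 2 * (x - 1) ^ 2) =o[𝓝 1] fun x => (x - 1) ^ 2)
    (hq : ∀ s, 0 < s → q s ∈ stdSimplex ℝ ι)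
    (hmax : ∀ s, 0 < s → ∀ r ∈ stdSimplex ℝ ι,
      s * ∑ i, r i * g i - phiDivergence φ p r ≤ s * ∑ i, q s i * g i - phiDivergence φ p (q s)) :
    Tendsto (fun s => (∑ i, q s i * g i) / s) (𝓝[>] 0) (𝓝 ((∑ i, p i * g i ^ 2) / K)) := by
  have hvalue := tendsto_optimalValue_div_sq hp1 hp hg hφconv hK hφ hq hmax
  convert tendsto_subgradient_div (fun s hs t ht => ?_) hvalue using 2
  · field_simp
  · linarith [hmax t ht (q s) (hq s hs)]

theorem stmt4_general {f : ι → ℝ} (hp1 : ∑ i, p i = 1) (hp : ∀ i, 0 < p i)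
    (hφconv : ConvexOn ℝ (Set.Ici 0) φ) (hK : 0 < K)
    (hφ : (fun x => φ x - K / 2 * (x - 1) ^ 2) =o[𝓝 1] fun x => (x - 1) ^ 2)
    (hq : ∀ δ, 0 < δ → q δ ∈ stdSimplex ℝ ι)
    (hmax : ∀ δ, 0 < δ → IsMaxOn (fun r => (∑ i, r i * f i) - (1 / δ) * phiDivergence φ p r)
      (stdSimplex ℝ ι) (q δ)) :
    Tendsto (fun δ => ((∑ i, q δ i * f i) - ∑ i, p i * f i) / δ) (𝓝[>] 0)
      (𝓝 ((∑ i, p i * (f i - ∑ j, p j * f j) ^ 2) / K)) := by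
  set m := ∑ j, p j * f j with hm
  have hcentre : ∀ r : ι → ℝ, ∑ i, r i = 1 → ∑ i, r i * (f i - m) = (∑ i, r i * f i) - m :=
    fun r hr => by simp only [mul_sub, Finset.sum_sub_distrib, ← Finset.sum_mul, hr, one_mul]
  have hmean : ∑ i, p i * (f i - m) = 0 := by rw [hcentre p hp1, ← hm, sub_self]
  refine (tendsto_sum_maximizer_mul_div hp1 hp hmean hφconv hK hφ hq fun δ hδ r hr => ?_).congr' ?_
  · have hrescale : ∀ x d : ℝ, δ * (x - m) - d = δ * (x - 1 / δ * d) - δ * m := fun x d => by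
      field_simp
      ring
    rw [hcentre r hr.2, hcentre (q δ) (hq δ hδ).2, hrescale, hrescale]
    exact sub_le_sub_right (mul_le_mul_of_nonneg_left (hmax δ hδ hr) hδ.le) _
  · filter_upwards [self_mem_nhdsWithin] with δ hδ
    rw [hcentre (q δ) (hq δ hδ).2]

end Divergence

/-- penalty-form worst-case sensitivity for smooth φ-divergence:
if `q̃(δ)` maximizes `q ↦ Σᵢ qᵢ fᵢ − (1/δ) Σᵢ pᵢ φ(qᵢ/pᵢ)` over the simplex
(and `q̃(0) = p`), then `lim_{δ ↓ 0} (Σᵢ q̃ᵢ(δ) fᵢ − E_p f)/δ = V_p(f)/φ''(1)`. -/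
theorem stmt4 (n : ℕ) (hn : 2 ≤ n) (p f : Fin n → ℝ)
    (hp1 : ∑ i, p i = 1) (hp : ∀ i, 0 < p i)
    (φ : ℝ → ℝ) (hφcont : ContinuousOn φ (Set.Ici (0 : ℝ)))
    (hφconv : StrictConvexOn ℝ (Set.Ici (0 : ℝ)) φ)
    (hφC2 : ContDiffOn ℝ 2 φ (Set.Ioi (0 : ℝ)))
    (hφ1 : φ 1 = 0) (hφ'1 : deriv φ 1 = 0) (hφ''1 : 0 < deriv (deriv φ) 1)
    (qt : ℝ → Fin n → ℝ) (hq0 : qt 0 = p)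
    (hqmem : ∀ δ : ℝ, 0 < δ →
      (∑ i, qt δ i = 1 ∧ ∀ i, 0 ≤ qt δ i))
    (hqmax : ∀ δ : ℝ, 0 < δ →
      IsMaxOn (fun q : Fin n → ℝ => (∑ i, q i * f i) - (1 / δ) * ∑ i, p i * φ (q i / p i))
        {q : Fin n → ℝ | ∑ i, q i = 1 ∧ ∀ i, 0 ≤ q i} (qt δ)) :
    Tendsto (fun δ : ℝ => ((∑ i, qt δ i * f i) - ∑ i, p i * f i) / δ)
      (nhdsWithin 0 (Set.Ioi 0))
      (nhds ((∑ i, p i * (f i - ∑ j, p j * f j) ^ 2) / deriv (deriv φ) 1)) := by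
  have hφ := isLittleO_sub_taylor_two isOpen_Ioi (convex_Ioi 0) (Set.mem_Ioi.2 one_pos) hφC2
  exact stmt4_general hp1 hp hφconv.convexOn hφ''1 (by simpa [hφ1, hφ'1] using hφ)
    (fun δ hδ => (hqmem δ hδ).symm) fun δ hδ r hr => hqmax δ hδ hr.symm
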